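/- arXiv:2310.19219 — 2 statements merged into one kernel-verified Lean document; each statement's English description precedes it below -/
import Mathlib

section
/- (Graphical representation of the quasipotential) Let f : K → ℝ be centered, ⟨f⟩^s = 0. Then the unique solution V of the Poisson equation LV(x) + f(x) = 0 for all x ∈ K with ⟨V⟩^s = 0 is given by V(x) = ∑_y (w(x→y)/W) f(y), where w(x→y) is the total weight of all rooted spanning two-tree forests in which x and y lie in the same tree rooted at y, and W = ∑_y w(y) is the total weight of all rooted spanning trees. -/
open scoped Classical

/-- The backward generator `L` of the Markov jump process with rates `k`:
`L x y = k x y` for `x ≠ y` and `L x x = -∑_{z ≠ x} k x z`. -/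
noncomputable def gen {K : Type*} [Fintype K] [DecidableEq K] (k : K → K → ℝ) :
    Matrix K K ℝ :=
  Matrix.of fun x y => if x = y then -∑ z ∈ Finset.univ.erase x, k x z else k x y

/-- Strong connectivity (irreducibility) of the digraph with an arc `(x,y)` whenever
`k x y > 0`. -/
def StronglyConnected {K : Type*} (k : K → K → ℝ) : Prop :=
  ∀ x y : K, Relation.ReflTransGen (fun a b => 0 < k a b) x y

/-- A spanning rooted forest of the digraph of `k`, encoded functionally: each non-fixed
vertex `z` carries the single outgoing arc `(z, F z)`, every vertex eventually reaches a
fixed point (the root of its tree, toward which all arcs of the tree are directed, so there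
are no cycles), and every arc is an arc of the digraph. -/
def IsSpForest {K : Type*} (k : K → K → ℝ) (F : K → K) : Prop :=
  (∀ z, ∃ n : ℕ, F (F^[n] z) = F^[n] z) ∧ ∀ z, F z ≠ z → 0 < k z (F z)

/-- The weight of a forest: the product of the rates `k z (F z)` over its arcs. -/
noncomputable def forestWeight {K : Type*} [Fintype K] [DecidableEq K]
    (k : K → K → ℝ) (F : K → K) : ℝ :=
  ∏ z ∈ Finset.univ.filter (fun z => F z ≠ z), k z (F z)

/-- A spanning tree rooted at `x`: a spanning forest whose only root is `x`. -/
def IsSpTree {K : Type*} [Fintype K] [DecidableEq K] (k : K → K → ℝ) (F : K → K) (x : K) :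
    Prop :=
  IsSpForest k F ∧ Finset.univ.filter (fun z => F z = z) = {x}

/-- `w(x)`: the total weight of all spanning trees rooted at `x`. -/
noncomputable def treeWt {K : Type*} [Fintype K] [DecidableEq K] (k : K → K → ℝ) (x : K) : ℝ :=
  ∑ F ∈ Finset.univ.filter (fun F : K → K => IsSpTree k F x), forestWeight k F

/-- `W = ∑_x w(x)`: the total weight of all rooted spanning trees. -/
noncomputable def treeWtTotal {K : Type*} [Fintype K] [DecidableEq K] (k : K → K → ℝ) : ℝ :=
  ∑ x, treeWt k x

/-- A rooted spanning two-tree forest: a spanning forest with exactly two roots. -/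
def IsTwoForest {K : Type*} [Fintype K] [DecidableEq K] (k : K → K → ℝ) (F : K → K) : Prop :=
  IsSpForest k F ∧ (Finset.univ.filter (fun z => F z = z)).card = 2

/-- `w(x → y)`: the total weight of all rooted spanning two-tree forests in which `x` and `y`
lie in the same tree, that tree being rooted at `y`. -/
noncomputable def wTo {K : Type*} [Fintype K] [DecidableEq K] (k : K → K → ℝ) (x y : K) : ℝ :=
  ∑ F ∈ Finset.univ.filter
      (fun F : K → K => IsTwoForest k F ∧ F y = y ∧ ∃ n : ℕ, F^[n] x = y),
    forestWeight k F

/-- `w(x, z)`: the total weight of all rooted spanning two-tree forests in which `x` and `z`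
lie in different trees and the tree containing `z` is rooted at `z`. -/
noncomputable def wSep {K : Type*} [Fintype K] [DecidableEq K] (k : K → K → ℝ) (x z : K) : ℝ :=
  ∑ F ∈ Finset.univ.filter
      (fun F : K → K => IsTwoForest k F ∧ F z = z ∧ ¬∃ n : ℕ, F^[n] x = z),
    forestWeight k F

/-- `W₂`: the total weight of all rooted spanning two-tree forests. -/
noncomputable def wTwoTotal {K : Type*} [Fintype K] [DecidableEq K] (k : K → K → ℝ) : ℝ :=
  ∑ F ∈ Finset.univ.filter (fun F : K → K => IsTwoForest k F), forestWeight k F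

/-- Functional forest: every vertex eventually reaches a fixed point. -/
def QForest {K : Type*} (F : K → K) : Prop := ∀ z, ∃ n : ℕ, F (F^[n] z) = F^[n] z

/-- Reachability along `F`. -/
def QReach {K : Type*} (F : K → K) (x z : K) : Prop := ∃ n : ℕ, F^[n] x = z

/-- Functional forests with `n` roots. -/
noncomputable def QFo (K : Type*) [Fintype K] [DecidableEq K] (n : ℕ) : Finset (K → K) :=
  Finset.univ.filter
    (fun F : K → K => QForest F ∧ (Finset.univ.filter (fun z => F z = z)).card = n)

/-- Indicator that `z` is a root reached from `x`. -/
noncomputable def qa {K : Type*} (F : K → K) (x z : K) : ℝ :=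
  if F z = z ∧ QReach F x z then 1 else 0

/-- Total weight of forests with `n` roots in which `x` lies in the tree rooted at `z`. -/
noncomputable def qA {K : Type*} [Fintype K] [DecidableEq K] (k : K → K → ℝ) (n : ℕ)
    (x z : K) : ℝ :=
  ∑ F ∈ QFo K n, forestWeight k F * qa F x z

/-- Total weight of forests with `n` roots. -/
noncomputable def qT {K : Type*} [Fintype K] [DecidableEq K] (k : K → K → ℝ) (n : ℕ) : ℝ :=
  ∑ F ∈ QFo K n, forestWeight k F

section basic
variable {K : Type*}

theorem QReach.refl (F : K → K) (x : K) : QReach F x x := ⟨0, rfl⟩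

theorem QReach.head {F : K → K} {x z : K} (h : QReach F (F x) z) : QReach F x z := by
  obtain ⟨n, hn⟩ := h
  exact ⟨n + 1, by rw [Function.iterate_succ_apply]; exact hn⟩

theorem QReach.trans {F : K → K} {x y z : K} (h : QReach F x y) (h' : QReach F y z) :
    QReach F x z := by
  obtain ⟨n, rfl⟩ := h
  obtain ⟨m, rfl⟩ := h'
  exact ⟨m + n, by rw [Function.iterate_add_apply]⟩

theorem qa_step (F : K → K) (x z : K) : qa F (F x) z = qa F x z := by
  unfold qa
  have : (F z = z ∧ QReach F (F x) z) ↔ (F z = z ∧ QReach F x z) := by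
    constructor
    · rintro ⟨h, h'⟩
      exact ⟨h, h'.head⟩
    · rintro ⟨h, n, hn⟩
      refine ⟨h, n, ?_⟩
      rw [← Function.iterate_succ_apply, Function.iterate_succ_apply', hn, h]
  simp only [this]

theorem qa_reach {F : K → K} {x y : K} (h : QReach F x y) (z : K) : qa F x z = qa F y z := by
  obtain ⟨n, rfl⟩ := h
  induction n with
  | zero => rfl
  | succ n ih => rw [ih, Function.iterate_succ_apply', qa_step]

theorem iterate_fixed' {F : K → K} {x : K} (h : F x = x) (n : ℕ) : F^[n] x = x :=
  Function.iterate_fixed h n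

theorem qa_root [DecidableEq K] {F : K → K} {x : K} (h : F x = x) (z : K) :
    qa F x z = if x = z then 1 else 0 := by
  unfold qa
  have : (F z = z ∧ QReach F x z) ↔ x = z := by
    constructor
    · rintro ⟨_, n, hn⟩
      rw [← hn, iterate_fixed' h]
    · rintro rfl
      exact ⟨h, QReach.refl _ _⟩
  simp only [this]

/-- No cycles in forests. -/
theorem QForest.no_cycle {F : K → K} (hF : QForest F) {x : K} (h : QReach F (F x) x) :
    F x = x := by
  obtain ⟨p, hp⟩ := h
  rw [← Function.iterate_succ_apply] at hp
  obtain ⟨N, hN⟩ := hF x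
  have h1 : F^[(p + 1) * N] x = x := by
    rw [Function.iterate_mul]
    exact iterate_fixed' hp N
  have h2 : F^[(p + 1) * N] x = F^[N] x := by
    have : (p + 1) * N = p * N + N := by ring
    rw [this, Function.iterate_add_apply, iterate_fixed' hN]
  rw [h1] at h2
  rw [← h2] at hN
  exact hN

variable [DecidableEq K]

theorem QReach.update {F : K → K} {v x : K} (u : K) (h : QReach F v x) :
    QReach (Function.update F x u) v x := by
  obtain ⟨n, hn⟩ := h
  induction n generalizing v with
  | zero => exact ⟨0, hn⟩
  | succ n ih =>
    by_cases hv : v = x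
    · subst hv; exact QReach.refl _ _
    · rw [Function.iterate_succ_apply] at hn
      have := ih hn
      apply QReach.head
      rwa [Function.update_of_ne hv]

theorem iterate_update {F : K → K} {v x : K} (u : K) (h : ¬ QReach F v x) (n : ℕ) :
    (Function.update F x u)^[n] v = F^[n] v := by
  induction n with
  | zero => rfl
  | succ n ih =>
    rw [Function.iterate_succ_apply', Function.iterate_succ_apply', ih, Function.update_of_ne]
    exact fun h' => h ⟨n, h'⟩

theorem reach_update_iff {F : K → K} {v x : K} (u : K) (h : ¬ QReach F v x) (z : K) :
    QReach (Function.update F x u) v z ↔ QReach F v z := by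
  unfold QReach
  simp only [iterate_update u h]

theorem qa_update {F : K → K} {v x : K} (u : K) (h : ¬ QReach F v x) (z : K) :
    qa (Function.update F x u) v z = qa F v z := by
  unfold qa
  have : (Function.update F x u z = z ∧ QReach (Function.update F x u) v z) ↔
      (F z = z ∧ QReach F v z) := by
    rw [reach_update_iff u h]
    constructor
    · rintro ⟨h1, h2⟩
      have hz : z ≠ x := by rintro rfl; exact h h2
      rw [Function.update_of_ne hz] at h1
      exact ⟨h1, h2⟩
    · rintro ⟨h1, h2⟩
      have hz : z ≠ x := by rintro rfl; exact h h2
      rw [Function.update_of_ne hz]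
      exact ⟨h1, h2⟩
  by_cases h' : F z = z ∧ QReach F v z
  · rw [if_pos h', if_pos (this.2 h')]
  · rw [if_neg h', if_neg (fun h'' => h' (this.1 h''))]

/-- Reaching a root. -/
theorem forest_iff {F : K → K} : QForest F ↔ ∀ v, ∃ c, F c = c ∧ QReach F v c := by
  constructor
  · intro h v
    obtain ⟨n, hn⟩ := h v
    exact ⟨_, hn, n, rfl⟩
  · intro h v
    obtain ⟨c, hc, n, rfl⟩ := h v
    exact ⟨n, hc⟩

theorem root_update {F : K → K} {v x : K} (hF : QForest F) (u : K) (h : ¬ QReach F v x) :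
    ∃ c, Function.update F x u c = c ∧ QReach (Function.update F x u) v c := by
  obtain ⟨c, hc, hr⟩ := forest_iff.1 hF v
  refine ⟨c, ?_, (reach_update_iff u h c).2 hr⟩
  rw [Function.update_of_ne]
  · exact hc
  · rintro rfl; exact h hr

theorem forest_update {F : K → K} {u x : K} (hF : QForest F) (h : ¬ QReach F u x) :
    QForest (Function.update F x u) := by
  rw [forest_iff]
  intro v
  by_cases hv : QReach F v x
  · obtain ⟨c, hc, hr⟩ := root_update hF u h
    refine ⟨c, hc, (hv.update u).trans (QReach.head ?_)⟩
    rwa [Function.update_self]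
  · exact root_update hF u hv

theorem forest_update_self {F : K → K} {x : K} (hF : QForest F) :
    QForest (Function.update F x x) := by
  rw [forest_iff]
  intro v
  by_cases hv : QReach F v x
  · exact ⟨x, Function.update_self .., hv.update x⟩
  · exact root_update hF x hv

variable [Fintype K]

theorem fix_update_same {F : K → K} {u x : K} (h : F x ≠ x) (hu : u ≠ x) :
    (Finset.univ.filter (fun z => Function.update F x u z = z)) =
      Finset.univ.filter (fun z => F z = z) := by
  ext z
  simp only [Finset.mem_filter, Finset.mem_univ, true_and]
  by_cases hz : z = x
  · subst hz; simp [h, hu]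
  · rw [Function.update_of_ne hz]

theorem fix_update_card {F : K → K} {u x : K} (h : F x = x) (hu : u ≠ x) :
    (Finset.univ.filter (fun z => F z = z)).card =
    (Finset.univ.filter (fun z => Function.update F x u z = z)).card + 1 := by
  rw [← Finset.card_insert_of_notMem (a := x)]
  · congr 1
    ext z
    simp only [Finset.mem_filter, Finset.mem_univ, true_and, Finset.mem_insert]
    by_cases hz : z = x
    · subst hz; simp [h]
    · rw [Function.update_of_ne hz]; simp [hz]
  · simp [hu]

/-- Weight of the arc from `v` to `u`. -/
noncomputable def qk (k : K → K → ℝ) (v u : K) : ℝ := if u = v then 1 else k v u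

theorem forestWeight_split (k : K → K → ℝ) (F : K → K) (x : K) :
    forestWeight k F = (∏ v ∈ Finset.univ.erase x, qk k v (F v)) * qk k x (F x) := by
  rw [Finset.prod_erase_mul _ _ (Finset.mem_univ x)]
  unfold forestWeight qk
  rw [Finset.prod_filter]
  apply Finset.prod_congr rfl
  intro v _
  by_cases h : F v = v <;> simp [h]

theorem forestWeight_update (k : K → K → ℝ) (F : K → K) (x u : K) :
    forestWeight k (Function.update F x u) * qk k x (F x) = forestWeight k F * qk k x u := by
  rw [forestWeight_split k _ x, forestWeight_split k F x, Function.update_self]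
  have : ∏ v ∈ Finset.univ.erase x, qk k v (Function.update F x u v) =
      ∏ v ∈ Finset.univ.erase x, qk k v (F v) := by
    apply Finset.prod_congr rfl
    intro v hv
    rw [Function.update_of_ne (Finset.ne_of_mem_erase hv)]
  rw [this]
  ring

theorem mem_QFo {n : ℕ} {F : K → K} :
    F ∈ QFo K n ↔ QForest F ∧ (Finset.univ.filter (fun z => F z = z)).card = n := by
  simp [QFo]

/-- Term of the main sum. -/
noncomputable def qt (k : K → K → ℝ) (x z : K) (p : (K → K) × K) : ℝ :=
  forestWeight k p.1 * k x p.2 * (qa p.1 p.2 z - qa p.1 x z)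

/-- The swap part cancels. -/
theorem swap_part (k : K → K → ℝ) (n : ℕ) (x z : K) :
    ∑ p ∈ (QFo K (n + 1) ×ˢ Finset.univ).filter
      (fun p : (K → K) × K => ¬ QReach p.1 p.2 x ∧ p.1 x ≠ x), qt k x z p = 0 := by
  have key : ∀ p ∈ (QFo K (n + 1) ×ˢ Finset.univ).filter
      (fun p : (K → K) × K => ¬ QReach p.1 p.2 x ∧ p.1 x ≠ x),
      qt k x z p + qt k x z (Function.update p.1 x p.2, p.1 x) = 0 := by
    rintro ⟨F, u⟩ hp
    simp only [Finset.mem_filter, Finset.mem_product, Finset.mem_univ, and_true, mem_QFo] at hp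
    obtain ⟨⟨hF, hc⟩, hr, hx⟩ := hp
    have hv : ¬ QReach F (F x) x := fun h => hx (hF.no_cycle h)
    have hu : u ≠ x := by rintro rfl; exact hr (QReach.refl _ _)
    have e1 : qa (Function.update F x u) (F x) z = qa F x z := by
      rw [qa_update u hv, qa_step]
    have e2 : qa (Function.update F x u) x z = qa F u z := by
      rw [← qa_step, Function.update_self, qa_update u hr]
    have e3 := forestWeight_update k F x u
    simp only [qk, hx, hu, if_false] at e3
    simp only [qt, e1, e2, e3]
    ring
  refine Finset.sum_involution (fun p _ => (Function.update p.1 x p.2, p.1 x)) key ?_ ?_ ?_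
  · intro p hp hne heq
    have := key p hp
    rw [heq] at this
    apply hne
    linarith
  · rintro ⟨F, u⟩ hp
    simp only [Finset.mem_filter, Finset.mem_product, Finset.mem_univ, and_true, mem_QFo] at hp ⊢
    obtain ⟨⟨hF, hc⟩, hr, hx⟩ := hp
    have hv : ¬ QReach F (F x) x := fun h => hx (hF.no_cycle h)
    have hu : u ≠ x := by rintro rfl; exact hr (QReach.refl _ _)
    refine ⟨⟨forest_update hF hr, ?_⟩, ?_, ?_⟩
    · rw [fix_update_same hx hu, hc]
    · rwa [reach_update_iff u hv]
    · rwa [Function.update_self]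
  · rintro ⟨F, u⟩ hp
    simp

/-- The root part is a bijection. -/
theorem root_part (k : K → K → ℝ) (n : ℕ) (x z : K) :
    ∑ p ∈ (QFo K (n + 1) ×ˢ Finset.univ).filter
      (fun p : (K → K) × K => ¬ QReach p.1 p.2 x ∧ p.1 x = x), qt k x z p =
    ∑ G ∈ (QFo K n).filter (fun G => G x ≠ x),
      forestWeight k G * (qa G x z - if x = z then 1 else 0) := by
  refine Finset.sum_bij' (fun p _ => Function.update p.1 x p.2)
    (fun G _ => (Function.update G x x, G x)) ?_ ?_ ?_ ?_ ?_
  · rintro ⟨F, u⟩ hp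
    simp only [Finset.mem_filter, Finset.mem_product, Finset.mem_univ, and_true, mem_QFo] at hp ⊢
    obtain ⟨⟨hF, hc⟩, hr, hx⟩ := hp
    have hu : u ≠ x := by rintro rfl; exact hr (QReach.refl _ _)
    refine ⟨⟨forest_update hF hr, ?_⟩, ?_⟩
    · have := fix_update_card hx hu
      omega
    · rwa [Function.update_self]
  · intro G hG
    simp only [Finset.mem_filter, Finset.mem_product, Finset.mem_univ, and_true, mem_QFo] at hG ⊢
    obtain ⟨⟨hF, hc⟩, hx⟩ := hG
    have hv : ¬ QReach G (G x) x := fun h => hx (hF.no_cycle h)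
    refine ⟨⟨forest_update_self hF, ?_⟩, ?_, ?_⟩
    · have := fix_update_card (F := Function.update G x x) (x := x) (by simp) hx
      rw [this]
      simp [hc]
    · rwa [reach_update_iff x hv]
    · rw [Function.update_self]
  · rintro ⟨F, u⟩ hp
    simp only [Finset.mem_filter, Finset.mem_product, Finset.mem_univ, and_true, mem_QFo] at hp
    obtain ⟨⟨hF, hc⟩, hr, hx⟩ := hp
    ext1
    · simp only [Function.update_idem]
      conv_lhs => rw [← hx]
      rw [hx]
      nth_rewrite 2 [← hx]
      exact Function.update_eq_self x F
    · simp
  · intro G hG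
    simp
  · rintro ⟨F, u⟩ hp
    simp only [Finset.mem_filter, Finset.mem_product, Finset.mem_univ, and_true, mem_QFo] at hp
    obtain ⟨⟨hF, hc⟩, hr, hx⟩ := hp
    have hu : u ≠ x := by rintro rfl; exact hr (QReach.refl _ _)
    have e2 : qa (Function.update F x u) x z = qa F u z := by
      rw [← qa_step, Function.update_self, qa_update u hr]
    have e3 := forestWeight_update k F x u
    simp only [qk, hx, hu, if_false, if_true, mul_one] at e3
    simp only [qt, e2, e3, qa_root hx]

theorem main_identity (k : K → K → ℝ) (n : ℕ) (x z : K) :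
    ∑ u, k x u * (qA k (n + 1) u z - qA k (n + 1) x z) =
      qA k n x z - if x = z then qT k n else 0 := by
  have e1 : ∑ u, k x u * (qA k (n + 1) u z - qA k (n + 1) x z) =
      ∑ p ∈ QFo K (n + 1) ×ˢ Finset.univ, qt k x z p := by
    rw [Finset.sum_product_right]
    apply Finset.sum_congr rfl
    intro u _
    unfold qA qt
    rw [← Finset.sum_sub_distrib, Finset.mul_sum]
    apply Finset.sum_congr rfl
    intro F _
    ring
  have e2 : ∑ p ∈ QFo K (n + 1) ×ˢ Finset.univ, qt k x z p =
      ∑ p ∈ (QFo K (n + 1) ×ˢ Finset.univ).filter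
        (fun p : (K → K) × K => ¬ QReach p.1 p.2 x), qt k x z p := by
    rw [Finset.sum_filter]
    apply Finset.sum_congr rfl
    rintro ⟨F, u⟩ _
    by_cases h : QReach F u x
    · simp [qt, qa_reach h]
    · simp [h]
  have e3 : qA k n x z - (if x = z then qT k n else 0) =
      ∑ G ∈ QFo K n, forestWeight k G * (qa G x z - if x = z then 1 else 0) := by
    unfold qA qT
    simp only [mul_sub, Finset.sum_sub_distrib]
    congr 1
    split_ifs <;> simp
  have e4 : ∑ G ∈ QFo K n, forestWeight k G * (qa G x z - if x = z then 1 else 0) =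
      ∑ G ∈ (QFo K n).filter (fun G => G x ≠ x),
        forestWeight k G * (qa G x z - if x = z then 1 else 0) := by
    rw [Finset.sum_filter]
    apply Finset.sum_congr rfl
    intro G _
    by_cases h : G x = x
    · rw [qa_root h, sub_self, mul_zero]; simp
    · rw [if_pos h]
  rw [e1, e2, e3, e4, ← root_part, ← Finset.sum_filter_add_sum_filter_not _ (fun p => p.1 x = x),
    Finset.filter_filter, Finset.filter_filter, swap_part, add_zero]

theorem weight_zero {k : K → K → ℝ} (hk : ∀ x y : K, x ≠ y → 0 ≤ k x y) {F : K → K}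
    (hF : QForest F) (h : ¬ IsSpForest k F) : forestWeight k F = 0 := by
  have : ∃ z, F z ≠ z ∧ k z (F z) = 0 := by
    by_contra hcon
    push Not at hcon
    exact h ⟨hF, fun z hz => lt_of_le_of_ne (hk _ _ (Ne.symm hz)) (Ne.symm (hcon z hz))⟩
  obtain ⟨z, hz, h0⟩ := this
  exact Finset.prod_eq_zero (Finset.mem_filter.2 ⟨Finset.mem_univ z, hz⟩) h0

theorem wTo_eq {k : K → K → ℝ} (hk : ∀ x y : K, x ≠ y → 0 ≤ k x y) (x y : K) :
    wTo k x y = qA k 2 x y := by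
  unfold wTo qA QFo
  rw [Finset.sum_filter, Finset.sum_filter]
  apply Finset.sum_congr rfl
  intro F _
  by_cases hS : IsSpForest k F
  · have hF : QForest F := hS.1
    simp only [IsTwoForest, hS, hF, true_and, qa]
    rw [ite_and]
    refine if_congr Iff.rfl ?_ rfl
    by_cases h : F y = y ∧ ∃ n : ℕ, F^[n] x = y
    · have h' : F y = y ∧ QReach F x y := h
      rw [if_pos h, if_pos h', mul_one]
    · have h' : ¬ (F y = y ∧ QReach F x y) := h
      rw [if_neg h, if_neg h', mul_zero]
  · by_cases hF : QForest F
    · simp [IsTwoForest, hS, weight_zero hk hF hS]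
    · simp [IsTwoForest, hS, hF]

theorem treeWt_eq {k : K → K → ℝ} (hk : ∀ x y : K, x ≠ y → 0 ≤ k x y) (x y : K) :
    treeWt k y = qA k 1 x y := by
  unfold treeWt qA QFo
  rw [Finset.sum_filter, Finset.sum_filter]
  apply Finset.sum_congr rfl
  intro F _
  by_cases hS : IsSpForest k F
  · have hF : QForest F := hS.1
    simp only [IsSpTree, hS, hF, true_and, qa, mul_ite, mul_one, mul_zero]
    rw [← ite_and]
    refine if_congr ?_ rfl rfl
    constructor
    · intro h
      refine ⟨by rw [h]; simp, ?_, ?_⟩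
      · have : y ∈ Finset.univ.filter (fun z => F z = z) := by rw [h]; simp
        simpa using this
      · obtain ⟨c, hc, hr⟩ := forest_iff.1 hF x
        have : c ∈ Finset.univ.filter (fun z => F z = z) := by simpa using hc
        rw [h, Finset.mem_singleton] at this
        rwa [← this]
    · rintro ⟨h1, h2, _⟩
      obtain ⟨c, hc⟩ := Finset.card_eq_one.1 h1
      have : y ∈ Finset.univ.filter (fun z => F z = z) := by simpa using h2
      rw [hc, Finset.mem_singleton] at this
      rw [hc, this]
  · by_cases hF : QForest F
    · simp [IsSpTree, hS, weight_zero hk hF hS]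
    · simp [IsSpTree, hS, hF]

theorem sum_qa {F : K → K} (hF : QForest F) (x : K) : ∑ z, qa F x z = 1 := by
  obtain ⟨c, hc, hr⟩ := forest_iff.1 hF x
  simp [qa_reach hr, qa_root hc]

theorem sum_qA (k : K → K → ℝ) (n : ℕ) (x : K) : ∑ z, qA k n x z = qT k n := by
  unfold qA qT
  rw [Finset.sum_comm]
  apply Finset.sum_congr rfl
  intro F hF
  rw [← Finset.mul_sum, sum_qa (mem_QFo.1 hF).1, mul_one]

theorem total_eq [Nonempty K] {k : K → K → ℝ} (hk : ∀ x y : K, x ≠ y → 0 ≤ k x y) :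
    treeWtTotal k = qT k 1 := by
  unfold treeWtTotal
  have x : K := Classical.arbitrary K
  rw [← sum_qA k 1 x]
  exact Finset.sum_congr rfl fun y _ => treeWt_eq hk x y

/-- `v` reaches `r` in `n` steps of the digraph. -/
def qsteps {K : Type*} (k : K → K → ℝ) (r : K) : ℕ → K → Prop
  | 0, v => v = r
  | n + 1, v => ∃ u, 0 < k v u ∧ qsteps k r n u

theorem exists_tree {k : K → K → ℝ} (hirr : StronglyConnected k) (r : K) :
    ∃ F : K → K, IsSpTree k F r := by
  have hs : ∀ v, ∃ n, qsteps k r n v := by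
    intro v
    induction hirr v r using Relation.ReflTransGen.head_induction_on with
    | refl => exact ⟨0, rfl⟩
    | head h _ ih =>
      obtain ⟨n, hn⟩ := ih
      exact ⟨n + 1, _, h, hn⟩
  let d : K → ℕ := fun v => Nat.find (hs v)
  have hstep : ∀ v, ∃ u, (v = r → u = r) ∧ (v ≠ r → 0 < k v u ∧ d u < d v) := by
    intro v
    by_cases hv : v = r
    · exact ⟨r, fun _ => rfl, fun h => absurd hv h⟩
    · have hd : qsteps k r (d v) v := Nat.find_spec (hs v)
      cases hdv : d v with
      | zero =>
        rw [hdv] at hd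
        exact absurd hd hv
      | succ m =>
        rw [hdv] at hd
        obtain ⟨u, hu, hm⟩ := hd
        refine ⟨u, fun h => absurd h hv, fun _ => ⟨hu, ?_⟩⟩
        have : d u ≤ m := Nat.find_min' (hs u) hm
        omega
  choose F hF1 hF2 using hstep
  have hfix : ∀ v, F v = v ↔ v = r := by
    intro v
    constructor
    · intro h
      by_contra hv
      have := (hF2 v hv).2
      rw [h] at this
      exact lt_irrefl _ this
    · intro h
      rw [hF1 v h, h]
  refine ⟨F, ⟨?_, ?_⟩, ?_⟩
  · have hreach : ∀ n v, d v < n → QReach F v r := by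
      intro n
      induction n with
      | zero => intro v h; omega
      | succ n ih =>
        intro v h
        by_cases hv : v = r
        · subst hv; exact QReach.refl _ _
        · apply QReach.head
          apply ih
          have := (hF2 v hv).2
          omega
    have : QForest F := forest_iff.2 fun v => ⟨r, (hfix r).2 rfl, hreach _ v (Nat.lt_succ_self _)⟩
    exact this
  · intro z hz
    exact (hF2 z (fun h => hz ((hfix z).2 h))).1
  · ext v
    simp [hfix]

theorem spforest_weight_pos {k : K → K → ℝ} {F : K → K} (h : IsSpForest k F) :
    0 < forestWeight k F :=
  Finset.prod_pos fun z hz => h.2 z (Finset.mem_filter.1 hz).2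

theorem total_pos [Nonempty K] {k : K → K → ℝ} (hirr : StronglyConnected k) :
    0 < treeWtTotal k := by
  unfold treeWtTotal
  refine Finset.sum_pos (fun r _ => ?_) Finset.univ_nonempty
  unfold treeWt
  refine Finset.sum_pos (fun F hF => spforest_weight_pos (Finset.mem_filter.1 hF).2.1) ?_
  obtain ⟨F, hF⟩ := exists_tree hirr r
  exact ⟨F, Finset.mem_filter.2 ⟨Finset.mem_univ _, hF⟩⟩

theorem harmonic_const [Nonempty K] {k : K → K → ℝ} (hk : ∀ x y : K, x ≠ y → 0 ≤ k x y)
    (hirr : StronglyConnected k) (h : K → ℝ) (hh : ∀ x, ∑ y, k x y * (h y - h x) = 0) :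
    ∃ c, ∀ x, h x = c := by
  obtain ⟨m, hm⟩ := Finite.exists_max h
  refine ⟨h m, fun x => ?_⟩
  induction hirr m x with
  | refl => rfl
  | @tail b c _ hbc ih =>
    have hle : ∀ y ∈ Finset.univ, k b y * (h y - h b) ≤ 0 := by
      intro y _
      by_cases hy : b = y
      · subst hy; simp
      · exact mul_nonpos_of_nonneg_of_nonpos (hk b y hy) (by rw [ih]; linarith [hm y])
    have := (Finset.sum_eq_zero_iff_of_nonpos hle).1 (hh b) c (Finset.mem_univ c)
    rcases mul_eq_zero.1 this with h0 | h0
    · linarith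
    · linarith

theorem stat_identity {k : K → K → ℝ} {ρ : K → ℝ} (hρ : Matrix.vecMul ρ (gen k) = 0)
    (h : K → ℝ) : ∑ x, ρ x * ∑ u, k x u * (h u - h x) = 0 := by
  have e : ∀ x, (Matrix.mulVec (gen k) h) x = ∑ u, k x u * (h u - h x) := by
    intro x
    unfold Matrix.mulVec dotProduct gen
    rw [← Finset.add_sum_erase _ _ (Finset.mem_univ x),
      ← Finset.add_sum_erase (a := x) Finset.univ (fun u => k x u * (h u - h x))
        (Finset.mem_univ x)]
    simp only [Matrix.of_apply, if_true, sub_self, mul_zero, zero_add, mul_sub,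
      Finset.sum_sub_distrib]
    rw [neg_mul, Finset.sum_mul, neg_add_eq_sub]
    congr 1
    apply Finset.sum_congr rfl
    intro u hu
    rw [if_neg (Ne.symm (Finset.ne_of_mem_erase hu))]
  have := Matrix.dotProduct_mulVec ρ (gen k) h
  rw [hρ, zero_dotProduct] at this
  rw [← this]
  unfold dotProduct
  simp only [e]

theorem stat_qA {k : K → K → ℝ} {ρ : K → ℝ} (hρ : Matrix.vecMul ρ (gen k) = 0)
    (n : ℕ) (z : K) : ∑ x, ρ x * qA k n x z = ρ z * qT k n := by
  have := stat_identity hρ (fun u => qA k (n + 1) u z)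
  simp only [main_identity] at this
  simp only [mul_sub, Finset.sum_sub_distrib, mul_ite, mul_zero, Finset.sum_ite_eq',
    Finset.mem_univ, if_true] at this
  linarith

end basic

/-- Graphical representation of the quasipotential: the unique centered solution of
`LV + f = 0` is `V(x) = ∑_y (w(x→y)/W) f(y)`. -/
theorem quasipotential_graphical_representation
    {K : Type*} [Fintype K] [DecidableEq K] [Nonempty K]
    (k : K → K → ℝ) (hk : ∀ x y : K, x ≠ y → 0 ≤ k x y)
    (hirr : StronglyConnected k)
    (ρ : K → ℝ) (hρpos : ∀ x, 0 < ρ x) (hρsum : ∑ x, ρ x = 1)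
    (hρstat : Matrix.vecMul ρ (gen k) = 0)
    (f : K → ℝ) (hf : ∑ x, f x * ρ x = 0)
    (V : K → ℝ) (hV : ∀ x, (∑ y, k x y * (V y - V x)) + f x = 0)
    (hVcent : ∑ x, V x * ρ x = 0) :
    ∀ x, V x = ∑ y, wTo k x y / treeWtTotal k * f y := by
  have hW := total_pos hirr
  have hT := total_eq hk
  have hw : ∀ x y, qA k 1 x y = ρ y * qT k 1 := by
    intro x y
    rw [← stat_qA hρstat 1 y]
    simp only [← treeWt_eq hk]
    rw [← Finset.sum_mul, hρsum, one_mul]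
  -- the unnormalised candidate
  let U : K → ℝ := fun x => ∑ y, qA k 2 x y * f y
  have hLU : ∀ x, ∑ u, k x u * (U u - U x) = - (qT k 1 * f x) := by
    intro x
    have e : ∑ u, k x u * (U u - U x) =
        ∑ y, (∑ u, k x u * (qA k 2 u y - qA k 2 x y)) * f y := by
      simp only [U, ← Finset.sum_sub_distrib, Finset.mul_sum, Finset.sum_mul]
      rw [Finset.sum_comm]
      refine Finset.sum_congr rfl fun y _ => Finset.sum_congr rfl fun u _ => ?_
      ring
    rw [e]
    simp only [main_identity k 1, hw, sub_mul, Finset.sum_sub_distrib]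
    have e2 : ∑ y, ρ y * qT k 1 * f y = 0 := by
      have : ∑ y, ρ y * qT k 1 * f y = qT k 1 * ∑ y, f y * ρ y := by
        rw [Finset.mul_sum]
        exact Finset.sum_congr rfl fun y _ => by ring
      rw [this, hf, mul_zero]
    rw [e2]
    simp
  have hUc : ∑ x, ρ x * U x = 0 := by
    have : ∑ x, ρ x * U x = ∑ y, (∑ x, ρ x * qA k 2 x y) * f y := by
      simp only [U, Finset.mul_sum, Finset.sum_mul]
      rw [Finset.sum_comm]
      refine Finset.sum_congr rfl fun y _ => Finset.sum_congr rfl fun u _ => ?_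
      ring
    rw [this]
    simp only [stat_qA hρstat]
    have : ∑ y, ρ y * qT k 2 * f y = qT k 2 * ∑ y, f y * ρ y := by
      rw [Finset.mul_sum]
      exact Finset.sum_congr rfl fun y _ => by ring
    rw [this, hf, mul_zero]
  obtain ⟨c, hc⟩ := harmonic_const hk hirr (fun x => U x - qT k 1 * V x) (by
    intro x
    have : ∑ y, k x y * ((U y - qT k 1 * V y) - (U x - qT k 1 * V x)) =
        ∑ y, k x y * (U y - U x) - qT k 1 * ∑ y, k x y * (V y - V x) := by
      rw [Finset.mul_sum, ← Finset.sum_sub_distrib]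
      exact Finset.sum_congr rfl fun y _ => by ring
    rw [this, hLU]
    have := hV x
    rw [show ∑ y, k x y * (V y - V x) = - f x by linarith]
    ring)
  have hc0 : c = 0 := by
    have h1 : ∑ x, ρ x * (U x - qT k 1 * V x) = c := by
      simp only [hc]
      rw [← Finset.sum_mul, hρsum, one_mul]
    have h2 : ∑ x, ρ x * (U x - qT k 1 * V x) =
        ∑ x, ρ x * U x - qT k 1 * ∑ x, V x * ρ x := by
      rw [Finset.mul_sum, ← Finset.sum_sub_distrib]
      exact Finset.sum_congr rfl fun y _ => by ring
    rw [← h1, h2, hUc, hVcent]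
    ring
  intro x
  have hx : U x = qT k 1 * V x := by
    have := hc x
    rw [hc0] at this
    linarith
  rw [hT] at hW ⊢
  have : ∑ y, wTo k x y / qT k 1 * f y = U x / qT k 1 := by
    simp only [U, Finset.sum_div, wTo_eq hk]
    exact Finset.sum_congr rfl fun y _ => by ring
  rw [this, hx]
  field_simp
end

section
/- For every x ∈ K, ∑_y ρ^s(y) τ(x,y) = W₂/W, where W₂ is the total weight of all rooted spanning two-tree forests (both trees carrying a root, summed over all choices of the two roots) and W is the total weight of all rooted spanning trees; in particular the left-hand side does not depend on x. Equivalently, ∑_y w(x,y) = W₂ for every x. -/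
open scoped Classical

namespace MFPT

/-- Every vertex eventually reaches a fixed point. -/
def Ac {K : Type*} (F : K → K) : Prop := ∀ z, ∃ n : ℕ, F (F^[n] z) = F^[n] z

/-- `b` lies on the forward orbit of `a`. -/
def Rch {K : Type*} (F : K → K) (a b : K) : Prop := ∃ n : ℕ, F^[n] a = b

section
variable {K : Type*} {F : K → K}

lemma Rch.refl (a : K) : Rch F a a := ⟨0, rfl⟩

lemma Rch.trans {a b c : K} (h : Rch F a b) (h' : Rch F b c) : Rch F a c := by
  obtain ⟨n, rfl⟩ := h
  obtain ⟨m, rfl⟩ := h'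
  exact ⟨m + n, by rw [Function.iterate_add_apply]⟩

lemma Rch.step (a : K) : Rch F a (F a) := ⟨1, rfl⟩

lemma rch_of_fix {p b : K} (hp : F p = p) (h : Rch F p b) : b = p := by
  obtain ⟨n, rfl⟩ := h
  exact Function.iterate_fixed hp n

lemma Rch.next {a b : K} (h : Rch F a b) (hne : a ≠ b) : Rch F (F a) b := by
  obtain ⟨n, hn⟩ := h
  cases n with
  | zero => exact absurd hn hne
  | succ n => exact ⟨n, by rwa [Function.iterate_succ_apply] at hn⟩

lemma Rch.comparable {a x y : K} (hx : Rch F a x) (hy : Rch F a y) : Rch F x y ∨ Rch F y x := by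
  obtain ⟨n, rfl⟩ := hx
  obtain ⟨m, rfl⟩ := hy
  rcases le_total n m with h | h
  · left
    exact ⟨m - n, by rw [← Function.iterate_add_apply, Nat.sub_add_cancel h]⟩
  · right
    exact ⟨n - m, by rw [← Function.iterate_add_apply, Nat.sub_add_cancel h]⟩

lemma rch_fix {a x y : K} (hy : F y = y) (ha : Rch F a y) (hx : Rch F a x) : Rch F x y := by
  rcases hx.comparable ha with h | h
  · exact h
  · rw [rch_of_fix hy h]; exact Rch.refl y

lemma Ac.no_return {x : K} (hF : Ac F) (hx : F x ≠ x) : ¬ Rch F (F x) x := by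
  rintro ⟨m, hm⟩
  obtain ⟨n, hn⟩ := hF x
  have hper : Function.IsPeriodicPt F (m + 1) x := by
    rw [Function.IsPeriodicPt, Function.IsFixedPt, Function.iterate_succ_apply]; exact hm
  have h1 : F^[n * (m + 1)] x = x := (hper.const_mul n)
  have h2 : n * (m + 1) = n * m + n := by ring
  rw [h2, Function.iterate_add_apply, Function.iterate_fixed hn] at h1
  rw [h1] at hn
  exact hx hn

variable [DecidableEq K]

lemma iter_update {a x z : K} (h : ¬ Rch F a x) (n : ℕ) :
    (Function.update F x z)^[n] a = F^[n] a := by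
  induction n with
  | zero => rfl
  | succ n ih =>
    rw [Function.iterate_succ_apply', Function.iterate_succ_apply', ih]
    exact Function.update_of_ne (fun e => h ⟨n, e⟩) _ _

lemma rch_update {a x z b : K} (h : ¬ Rch F a x) :
    Rch (Function.update F x z) a b ↔ Rch F a b := by
  simp only [Rch, iter_update h]

lemma ac_update_aux {x z : K} (hF : Ac F)
    (hx : ∃ n : ℕ, Function.update F x z ((Function.update F x z)^[n] x)
      = (Function.update F x z)^[n] x) : Ac (Function.update F x z) := by
  intro a
  obtain ⟨n, hn⟩ := hF a
  induction n generalizing a with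
  | zero =>
    by_cases hax : a = x
    · rw [hax]; exact hx
    · exact ⟨0, by simpa [Function.update_of_ne hax] using hn⟩
  | succ n ih =>
    by_cases hax : a = x
    · rw [hax]; exact hx
    · rw [Function.iterate_succ_apply] at hn
      obtain ⟨m, hm⟩ := ih (F a) hn
      refine ⟨m + 1, ?_⟩
      rw [Function.iterate_succ_apply, Function.update_of_ne hax]
      exact hm

lemma ac_update_self {x : K} (hF : Ac F) : Ac (Function.update F x x) :=
  ac_update_aux hF ⟨0, by simp⟩

lemma ac_update {x z : K} (hF : Ac F) (hz : ¬ Rch F z x) : Ac (Function.update F x z) := by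
  refine ac_update_aux hF ?_
  obtain ⟨n, hn⟩ := hF z
  refine ⟨n + 1, ?_⟩
  rw [Function.iterate_succ_apply, Function.update_self, iter_update hz,
    Function.update_of_ne (fun e => hz ⟨n, e⟩)]
  exact hn

end

section
variable {K : Type*} [Fintype K] [DecidableEq K]

/-- Acyclic, exactly two roots, one of which is `y`. -/
def S (y : K) (F : K → K) : Prop :=
  Ac F ∧ (Finset.univ.filter (fun z => F z = z)).card = 2 ∧ F y = y

/-- Acyclic with a single root `y`. -/
def T (y : K) (F : K → K) : Prop :=
  Ac F ∧ Finset.univ.filter (fun z => F z = z) = {y}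

lemma fix_update {F : K → K} {x z : K} (hx : F x ≠ x) (hz : z ≠ x) :
    Finset.univ.filter (fun v => Function.update F x z v = v) =
      Finset.univ.filter (fun v => F v = v) := by
  ext v
  by_cases h : v = x
  · subst h; simp [hx, hz]
  · simp [Function.update_of_ne h]

lemma caseA {F : K → K} {x y z : K} (hxy : x ≠ y) (hF : S y F) (hx : ¬ Rch F x y)
    (hz : Rch F z y) (hne : F x ≠ x) :
    S y (Function.update F x z) ∧ Rch (Function.update F x z) x y ∧
      ¬ Rch (Function.update F x z) (F x) y := by
  obtain ⟨hA, hc, hy⟩ := hF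
  have hzx : ¬ Rch F z x := fun h => hx (rch_fix hy hz h)
  have hzx' : z ≠ x := fun h => hx (h ▸ hz)
  refine ⟨⟨ac_update hA hzx, ?_, ?_⟩, ?_, ?_⟩
  · rw [fix_update hne hzx']; exact hc
  · rw [Function.update_of_ne hxy.symm]; exact hy
  · have h1 := Rch.step (F := Function.update F x z) x
    rw [Function.update_self] at h1
    exact h1.trans ((rch_update hzx).2 hz)
  · rw [rch_update (hA.no_return hne)]
    exact fun h => hx ((Rch.step x).trans h)

lemma caseB {F : K → K} {x y z : K} (hxy : x ≠ y) (hF : S y F) (hx : Rch F x y)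
    (hz : ¬ Rch F z y) :
    S y (Function.update F x z) ∧ ¬ Rch (Function.update F x z) x y ∧
      Rch (Function.update F x z) (F x) y ∧ z ≠ x ∧ F x ≠ x := by
  obtain ⟨hA, hc, hy⟩ := hF
  have hzx : ¬ Rch F z x := fun h => hz (h.trans hx)
  have hzx' : z ≠ x := fun h => hz (h ▸ hx)
  have hne : F x ≠ x := fun h => hxy (rch_of_fix h hx).symm
  refine ⟨⟨ac_update hA hzx, ?_, ?_⟩, ?_, ?_, hzx', hne⟩
  · rw [fix_update hne hzx']; exact hc
  · rw [Function.update_of_ne hxy.symm]; exact hy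
  · intro h
    have := h.next hxy
    rw [Function.update_self, rch_update hzx] at this
    exact hz this
  · rw [rch_update (hA.no_return hne)]
    exact hx.next hxy

lemma caseC {F : K → K} {x y z : K} (hxy : x ≠ y) (hF : S y F) (hx : F x = x)
    (hz : Rch F z y) : T y (Function.update F x z) ∧ z ≠ x := by
  obtain ⟨hA, hc, hy⟩ := hF
  have hxn : ¬ Rch F x y := fun h => hxy (rch_of_fix hx h).symm
  have hzx : ¬ Rch F z x := fun h => hxn (rch_fix hy hz h)
  have hzx' : z ≠ x := fun h => hxn (h ▸ hz)
  refine ⟨⟨ac_update hA hzx, ?_⟩, hzx'⟩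
  have hset : ({x, y} : Finset K) = Finset.univ.filter (fun z => F z = z) := by
    apply Finset.eq_of_subset_of_card_le
    · intro v; simp only [Finset.mem_insert, Finset.mem_singleton, Finset.mem_filter]
      rintro (rfl | rfl) <;> simp [*]
    · rw [hc, Finset.card_pair hxy]
  ext v
  have hv : v ∈ ({x, y} : Finset K) ↔ F v = v := by rw [hset]; simp
  simp only [Finset.mem_insert, Finset.mem_singleton] at hv
  by_cases h : v = x
  · subst h; simp [hzx', hxy]
  · simp [Function.update_of_ne h, ← hv, h]

lemma caseD {F : K → K} {x y : K} (hxy : x ≠ y) (hF : T y F) :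
    S y (Function.update F x x) ∧ Rch (Function.update F x x) (F x) y ∧ F x ≠ x := by
  obtain ⟨hA, hs⟩ := hF
  have hv : ∀ v, F v = v ↔ v = y := by
    intro v
    have : v ∈ Finset.univ.filter (fun z => F z = z) ↔ v ∈ ({y} : Finset K) := by rw [hs]
    simpa using this
  have hne : F x ≠ x := fun h => hxy ((hv x).1 h)
  refine ⟨⟨ac_update_self hA, ?_, ?_⟩, ?_, hne⟩
  · rw [← Finset.card_pair hxy]
    congr 1
    ext v
    by_cases h : v = x
    · subst h; simp
    · simp [Function.update_of_ne h, hv, h]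
  · rw [Function.update_of_ne hxy.symm]; exact (hv y).2 rfl
  · rw [rch_update (hA.no_return hne)]
    obtain ⟨n, hn⟩ := hA (F x)
    exact ⟨n, (hv _).1 hn⟩

lemma wt_update (k : K → K → ℝ) (F : K → K) (x z : K) (hz : z ≠ x) :
    forestWeight k (Function.update F x z) =
      k x z * ∏ v ∈ Finset.univ.erase x, (if F v ≠ v then k v (F v) else 1) := by
  unfold forestWeight
  rw [Finset.prod_filter, ← Finset.mul_prod_erase _ _ (Finset.mem_univ x)]
  congr 1
  · simp [hz]
  · apply Finset.prod_congr rfl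
    intro v hv
    rw [Function.update_of_ne (Finset.ne_of_mem_erase hv)]

lemma wt_fix (k : K → K → ℝ) (F : K → K) (x : K) (hx : F x = x) :
    forestWeight k F = ∏ v ∈ Finset.univ.erase x, (if F v ≠ v then k v (F v) else 1) := by
  unfold forestWeight
  rw [Finset.prod_filter, ← Finset.mul_prod_erase _ _ (Finset.mem_univ x)]
  simp [hx]

lemma wt_nofix (k : K → K → ℝ) (F : K → K) (x : K) (hx : F x ≠ x) :
    forestWeight k F =
      k x (F x) * ∏ v ∈ Finset.univ.erase x, (if F v ≠ v then k v (F v) else 1) := by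
  have := wt_update k F x (F x) hx
  rwa [Function.update_eq_self] at this

lemma wt_zero (k : K → K → ℝ) (hk : ∀ x y : K, x ≠ y → 0 ≤ k x y) (F : K → K)
    (h : ¬ ∀ z, F z ≠ z → 0 < k z (F z)) : forestWeight k F = 0 := by
  push Not at h
  obtain ⟨z, hz, hle⟩ := h
  unfold forestWeight
  apply Finset.prod_eq_zero (i := z) (by simp [hz])
  exact le_antisymm hle (hk _ _ (Ne.symm hz))

lemma treeWt_eq (k : K → K → ℝ) (hk : ∀ x y : K, x ≠ y → 0 ≤ k x y) (y : K) :
    treeWt k y = ∑ F : K → K, if T y F then forestWeight k F else 0 := by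
  unfold treeWt
  rw [Finset.sum_filter]
  apply Finset.sum_congr rfl
  intro F _
  by_cases h : ∀ z, F z ≠ z → 0 < k z (F z)
  · apply if_congr _ rfl rfl
    unfold IsSpTree IsSpForest T Ac
    tauto
  · simp [wt_zero k hk F h]

lemma wSep_eq (k : K → K → ℝ) (hk : ∀ x y : K, x ≠ y → 0 ≤ k x y) (x y : K) :
    wSep k x y = ∑ F : K → K, if S y F ∧ ¬ Rch F x y then forestWeight k F else 0 := by
  unfold wSep
  rw [Finset.sum_filter]
  apply Finset.sum_congr rfl
  intro F _
  by_cases h : ∀ z, F z ≠ z → 0 < k z (F z)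
  · apply if_congr _ rfl rfl
    unfold IsTwoForest IsSpForest S Ac Rch
    tauto
  · simp [wt_zero k hk F h]

lemma sumAB (k : K → K → ℝ) (x y : K) (hxy : x ≠ y) :
    (∑ p ∈ Finset.univ.filter (fun p : (K → K) × K =>
        (S y p.1 ∧ ¬ Rch p.1 x y ∧ Rch p.1 p.2 y) ∧ p.1 x ≠ x), k x p.2 * forestWeight k p.1) =
    ∑ p ∈ Finset.univ.filter (fun p : (K → K) × K =>
        S y p.1 ∧ Rch p.1 x y ∧ ¬ Rch p.1 p.2 y), k x p.2 * forestWeight k p.1 := by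
  refine Finset.sum_nbij' (fun p => (Function.update p.1 x p.2, p.1 x))
    (fun p => (Function.update p.1 x p.2, p.1 x)) ?_ ?_ ?_ ?_ ?_
  · rintro ⟨F, z⟩ h
    simp only [Finset.mem_filter, Finset.mem_univ, true_and] at h ⊢
    obtain ⟨⟨h1, h2, h3⟩, h4⟩ := h
    exact caseA hxy h1 h2 h3 h4
  · rintro ⟨F, z⟩ h
    simp only [Finset.mem_filter, Finset.mem_univ, true_and] at h ⊢
    obtain ⟨h1, h2, h3⟩ := h
    obtain ⟨g1, g2, g3, g4, g5⟩ := caseB hxy h1 h2 h3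
    refine ⟨⟨g1, g2, g3⟩, ?_⟩
    rwa [Function.update_self]
  · rintro ⟨F, z⟩ h
    simp
  · rintro ⟨F, z⟩ h
    simp
  · rintro ⟨F, z⟩ h
    simp only [Finset.mem_filter, Finset.mem_univ, true_and] at h ⊢
    obtain ⟨⟨h1, h2, h3⟩, h4⟩ := h
    have hzx : z ≠ x := fun e => h2 (e ▸ h3)
    rw [wt_update k F x z hzx, wt_nofix k F x h4]
    ring

lemma sumC (k : K → K → ℝ) (x y : K) (hxy : x ≠ y) :
    (∑ p ∈ Finset.univ.filter (fun p : (K → K) × K =>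
        (S y p.1 ∧ ¬ Rch p.1 x y ∧ Rch p.1 p.2 y) ∧ ¬ p.1 x ≠ x), k x p.2 * forestWeight k p.1) =
    ∑ F ∈ Finset.univ.filter (fun F : K → K => T y F), forestWeight k F := by
  refine Finset.sum_nbij' (fun p => Function.update p.1 x p.2)
    (fun F => (Function.update F x x, F x)) ?_ ?_ ?_ ?_ ?_
  · rintro ⟨F, z⟩ h
    simp only [Finset.mem_filter, Finset.mem_univ, true_and, not_not] at h ⊢
    obtain ⟨⟨h1, h2, h3⟩, h4⟩ := h
    exact (caseC hxy h1 h4 h3).1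
  · intro F h
    simp only [Finset.mem_filter, Finset.mem_univ, true_and, not_not] at h ⊢
    obtain ⟨g1, g2, g3⟩ := caseD hxy h
    refine ⟨⟨g1, ?_, g2⟩, by simp⟩
    exact fun e => hxy (rch_of_fix (by simp) e).symm
  · rintro ⟨F, z⟩ h
    simp only [Finset.mem_filter, Finset.mem_univ, true_and, not_not] at h
    have := h.2
    simp only [Function.update_idem, Function.update_self, Prod.mk.injEq, and_true]
    conv_lhs => rw [← this]
    rw [this]
    exact Function.update_eq_self_iff.2 this.symm
  · intro F h
    simp
  · rintro ⟨F, z⟩ h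
    simp only [Finset.mem_filter, Finset.mem_univ, true_and, not_not] at h ⊢
    obtain ⟨⟨h1, h2, h3⟩, h4⟩ := h
    have hzx : z ≠ x := fun e => h2 (e ▸ h3)
    rw [wt_update k F x z hzx, wt_fix k F x h4]

lemma wSep_poisson (k : K → K → ℝ) (hk : ∀ x y : K, x ≠ y → 0 ≤ k x y) (x y : K) (hxy : x ≠ y) :
    (∑ z, k x z * (wSep k z y - wSep k x y)) + treeWt k y = 0 := by
  have hAB := sumAB k x y hxy
  have hC := sumC k x y hxy
  have hA := Finset.sum_filter_add_sum_filter_not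
    (Finset.univ.filter (fun p : (K → K) × K => S y p.1 ∧ ¬ Rch p.1 x y ∧ Rch p.1 p.2 y))
    (fun p => p.1 x ≠ x) (fun p => k x p.2 * forestWeight k p.1)
  rw [Finset.filter_filter, Finset.filter_filter, hAB, hC] at hA
  have hT : treeWt k y = ∑ F ∈ Finset.univ.filter (fun F : K → K => T y F), forestWeight k F := by
    rw [treeWt_eq k hk, Finset.sum_filter]
  rw [← hT] at hA
  have hD : (∑ z, k x z * (wSep k z y - wSep k x y)) =
      (∑ p ∈ Finset.univ.filter (fun p : (K → K) × K =>
        S y p.1 ∧ Rch p.1 x y ∧ ¬ Rch p.1 p.2 y), k x p.2 * forestWeight k p.1) -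
      ∑ p ∈ Finset.univ.filter (fun p : (K → K) × K => S y p.1 ∧ ¬ Rch p.1 x y ∧ Rch p.1 p.2 y),
        k x p.2 * forestWeight k p.1 := by
    rw [Finset.sum_filter, Finset.sum_filter, ← Finset.sum_sub_distrib, Fintype.sum_prod_type_right]
    apply Finset.sum_congr rfl
    intro z _
    rw [wSep_eq k hk, wSep_eq k hk, ← Finset.sum_sub_distrib, Finset.mul_sum]
    apply Finset.sum_congr rfl
    intro F _
    by_cases h1 : S y F <;> by_cases h2 : Rch F x y <;> by_cases h3 : Rch F z y <;>
      simp [h1, h2, h3]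
  rw [hD]
  linarith

lemma max_principle (k : K → K → ℝ) (hk : ∀ x y : K, x ≠ y → 0 ≤ k x y)
    (hirr : StronglyConnected k) (y : K) (g : K → ℝ) (hy : g y = 0)
    (hg : ∀ x, x ≠ y → ∑ z, k x z * (g z - g x) = 0) (x : K) : g x ≤ 0 := by
  obtain ⟨m, -, hm⟩ := Finset.exists_max_image Finset.univ g ⟨x, Finset.mem_univ x⟩
  have key : g y = g m := by
    have hr := hirr m y
    suffices ∀ a, Relation.ReflTransGen (fun a b => 0 < k a b) a y → g a = g m → g y = g m from
      this m hr rfl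
    intro a ha
    induction ha using Relation.ReflTransGen.head_induction_on with
    | refl => exact id
    | @head a c hac _ ih =>
      intro hga
      by_cases hay : a = y
      · rw [← hay]; exact hga
      apply ih
      have hle : ∀ z ∈ Finset.univ, k a z * (g z - g a) ≤ 0 := by
        intro z _
        by_cases haz : a = z
        · simp [haz]
        · apply mul_nonpos_of_nonneg_of_nonpos (hk _ _ haz)
          rw [hga]; linarith [hm z (Finset.mem_univ z)]
      have h0 := (Finset.sum_eq_zero_iff_of_nonpos hle).1 (hg a hay) c (Finset.mem_univ c)
      rcases mul_eq_zero.1 h0 with h | h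
      · exact absurd h hac.ne'
      · linarith
  linarith [hm x (Finset.mem_univ x)]

lemma wSep_self (k : K → K → ℝ) (y : K) : wSep k y y = 0 := by
  unfold wSep
  rw [Finset.filter_eq_empty_iff.2, Finset.sum_empty]
  rintro F _ ⟨_, _, h⟩
  exact h ⟨0, rfl⟩

lemma tau_eq (k : K → K → ℝ) (hk : ∀ x y : K, x ≠ y → 0 ≤ k x y)
    (hirr : StronglyConnected k)
    (τ : K → K → ℝ) (hτ0 : ∀ z, τ z z = 0)
    (hτ : ∀ z x, x ≠ z → (∑ y, k x y * (τ y z - τ x z)) + 1 = 0) (x y : K) :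
    treeWt k y * τ x y = wSep k x y := by
  have hg : ∀ a, a ≠ y → ∑ z, k a z *
      ((treeWt k y * τ z y - wSep k z y) - (treeWt k y * τ a y - wSep k a y)) = 0 := by
    intro a ha
    have h1 := hτ y a ha
    have h2 := wSep_poisson k hk a y ha
    have h3 : ∑ z, k a z *
      ((treeWt k y * τ z y - wSep k z y) - (treeWt k y * τ a y - wSep k a y)) =
      treeWt k y * (∑ z, k a z * (τ z y - τ a y)) - ∑ z, k a z * (wSep k z y - wSep k a y) := by
      rw [Finset.mul_sum, ← Finset.sum_sub_distrib]
      apply Finset.sum_congr rfl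
      intro z _
      ring
    rw [h3, eq_neg_of_add_eq_zero_left h1, eq_neg_of_add_eq_zero_left h2]
    ring
  have u1 := max_principle k hk hirr y (fun z => treeWt k y * τ z y - wSep k z y)
    (by simp [hτ0, wSep_self]) hg x
  have u2 := max_principle k hk hirr y (fun z => -(treeWt k y * τ z y - wSep k z y))
    (by simp [hτ0, wSep_self]) (by
      intro a ha
      rw [← neg_eq_zero, ← hg a ha, ← Finset.sum_neg_distrib]
      apply Finset.sum_congr rfl
      intro z _
      ring) x
  linarith

lemma sum_wSep (k : K → K → ℝ) (x : K) : ∑ y, wSep k x y = wTwoTotal k := by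
  unfold wSep wTwoTotal
  simp only [Finset.sum_filter]
  rw [Finset.sum_comm]
  apply Finset.sum_congr rfl
  intro F _
  by_cases hF : IsTwoForest k F
  · obtain ⟨hS, hc⟩ := id hF
    obtain ⟨a, b, hab, hs⟩ := Finset.card_eq_two.1 hc
    have hv : ∀ v, F v = v ↔ v = a ∨ v = b := by
      intro v
      have : v ∈ Finset.univ.filter (fun z => F z = z) ↔ v ∈ ({a, b} : Finset K) := by rw [hs]
      simpa using this
    have ha := (hv a).2 (Or.inl rfl)
    have hb := (hv b).2 (Or.inr rfl)
    have key : ∃ c, ∀ y, (F y = y ∧ ¬ ∃ n : ℕ, F^[n] x = y) ↔ y = c := by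
      obtain ⟨n, hn⟩ := hS.1 x
      have hex : ∀ p q : K, p ≠ q → F p = p → F q = q → Rch F x p → ¬ Rch F x q := by
        intro p q hpq hp hq h1 h2
        exact hpq (rch_of_fix hp (rch_fix hq h2 h1)).symm
      rcases (hv _).1 hn with h | h
      · refine ⟨b, fun y => ⟨?_, ?_⟩⟩
        · rintro ⟨h1, h2⟩
          rcases (hv y).1 h1 with rfl | rfl
          · exact absurd ⟨n, h⟩ h2
          · rfl
        · rintro rfl
          exact ⟨hb, hex a y hab ha hb ⟨n, h⟩⟩
      · refine ⟨a, fun y => ⟨?_, ?_⟩⟩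
        · rintro ⟨h1, h2⟩
          rcases (hv y).1 h1 with rfl | rfl
          · rfl
          · exact absurd ⟨n, h⟩ h2
        · rintro rfl
          exact ⟨ha, hex b y hab.symm hb ha ⟨n, h⟩⟩
    obtain ⟨c, hc⟩ := key
    simp only [hF, true_and, hc]
    simp
  · simp [hF]

end

end MFPT

/-- For every `x`, `∑_y ρˢ(y) τ(x,y) = W₂/W` (independently of `x`); equivalently,
`∑_y w(x,y) = W₂` for every `x`. -/
theorem mfpt_stationary_average
    {K : Type*} [Fintype K] [DecidableEq K]
    (k : K → K → ℝ) (hk : ∀ x y : K, x ≠ y → 0 ≤ k x y)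
    (hirr : StronglyConnected k)
    (ρ : K → ℝ) (hρpos : ∀ x, 0 < ρ x) (hρsum : ∑ x, ρ x = 1)
    (hρstat : Matrix.vecMul ρ (gen k) = 0)
    (hρkir : ∀ x, ρ x = treeWt k x / treeWtTotal k)
    (τ : K → K → ℝ) (hτ0 : ∀ z, τ z z = 0)
    (hτ : ∀ z x, x ≠ z → (∑ y, k x y * (τ y z - τ x z)) + 1 = 0) :
    (∀ x, ∑ y, ρ y * τ x y = wTwoTotal k / treeWtTotal k) ∧
    (∀ x, ∑ y, wSep k x y = wTwoTotal k) := by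
  refine ⟨fun x => ?_, MFPT.sum_wSep k⟩
  rw [← MFPT.sum_wSep k x, Finset.sum_div]
  apply Finset.sum_congr rfl
  intro y _
  rw [hρkir, ← MFPT.tau_eq k hk hirr τ hτ0 hτ x y]
  ring
end
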